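/- (Rank access structure duality.) For all nested F_{q^m}-linear codes C_2 ⊊ C_1 ⊆ F_{q^m}^n and every F_q-subspace L ⊆ F_q^n, one has dim_{F_{q^m}}((C_2^⊥)^L) − dim_{F_{q^m}}((C_1^⊥)^L) + dim_{F_{q^m}}(C_1^{L^⊥}) − dim_{F_{q^m}}(C_2^{L^⊥}) = dim C_1 − dim C_2. In particular, for every 0 ≤ r ≤ ℓ = dim(C_1/C_2): dim((C_2^⊥)^L / (C_1^⊥)^L) = r if and only if dim(C_1^{L^⊥} / C_2^{L^⊥}) = ℓ − r. -/

import Mathlib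

open Submodule Module

namespace RankPaper

variable {n : ℕ}

/-- The coordinatewise `q^i`-th power map on `Fqm^n`. -/
def qpowMap (q i : ℕ) {Fqm : Type} [Field Fqm] (v : Fin n → Fqm) : Fin n → Fqm :=
  fun j => v j ^ q ^ i

/-- The Galois closure `D* = Σ_{i=0}^{m-1} D^{q^i}` of a subspace (as the span of the
union of the images of `D` under the coordinatewise `q^i`-power maps, `0 ≤ i < m`). -/
def galClosure (q m : ℕ) {Fqm : Type} [Field Fqm] (D : Submodule Fqm (Fin n → Fqm)) :
    Submodule Fqm (Fin n → Fqm) :=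
  Submodule.span Fqm (⋃ i ∈ Finset.range m, qpowMap q i '' (D : Set (Fin n → Fqm)))

/-- `D` is Galois closed if `D = D*`. -/
def GaloisClosed (q m : ℕ) {Fqm : Type} [Field Fqm] (D : Submodule Fqm (Fin n → Fqm)) : Prop :=
  galClosure q m D = D

/-- Rank weight of a subspace: `wt_R(D) = dim_{Fqm} D*`. -/
noncomputable def wtR (q m : ℕ) {Fqm : Type} [Field Fqm]
    (D : Submodule Fqm (Fin n → Fqm)) : ℕ :=
  finrank Fqm (galClosure q m D)

/-- Rank weight of a vector: `wt_R(c) = wt_R(span {c})`. -/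
noncomputable def wtRv (q m : ℕ) {Fqm : Type} [Field Fqm] (c : Fin n → Fqm) : ℕ :=
  wtR q m (Submodule.span Fqm ({c} : Set (Fin n → Fqm)))

/-- Hamming weight of a subspace: the number of coordinates where some element is nonzero. -/
noncomputable def wtH {Fqm : Type} [Field Fqm] (D : Submodule Fqm (Fin n → Fqm)) : ℕ :=
  {i : Fin n | ∃ d ∈ D, d i ≠ 0}.ncard

/-- `r`-th generalized rank weight of a linear code. -/
noncomputable def dR (q m : ℕ) {Fqm : Type} [Field Fqm]
    (C : Submodule Fqm (Fin n → Fqm)) (r : ℕ) : ℕ :=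
  sInf { dv | ∃ V : Submodule Fqm (Fin n → Fqm),
    GaloisClosed q m V ∧ r ≤ finrank Fqm ↥(C ⊓ V) ∧ dv = finrank Fqm ↥V }

/-- `r`-th generalized Hamming weight of a linear code. -/
noncomputable def dH {Fqm : Type} [Field Fqm]
    (C : Submodule Fqm (Fin n → Fqm)) (r : ℕ) : ℕ :=
  sInf { w | ∃ D : Submodule Fqm (Fin n → Fqm), D ≤ C ∧ finrank Fqm ↥D = r ∧ w = wtH D }

/-- `r`-th relative generalized rank weight of a nested code pair. -/
noncomputable def MR (q m : ℕ) {Fqm : Type} [Field Fqm]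
    (C₁ C₂ : Submodule Fqm (Fin n → Fqm)) (r : ℕ) : ℕ :=
  sInf { dv | ∃ V : Submodule Fqm (Fin n → Fqm), GaloisClosed q m V ∧
    r ≤ finrank Fqm ↥(C₁ ⊓ V) - finrank Fqm ↥(C₂ ⊓ V) ∧ dv = finrank Fqm ↥V }

/-- Minimum rank distance of an arbitrary (possibly nonlinear) code. -/
noncomputable def dRset (q m : ℕ) {Fqm : Type} [Field Fqm] (C : Set (Fin n → Fqm)) : ℕ :=
  sInf { w | ∃ c₁ ∈ C, ∃ c₂ ∈ C, c₁ ≠ c₂ ∧ w = wtRv q m (c₁ - c₂) }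

/-- The linear functional `x ↦ Σ_j x_j y_j` (dot product with `y`). -/
def dotLin {K : Type} [Field K] (y : Fin n → K) : (Fin n → K) →ₗ[K] K :=
  ∑ j, y j • LinearMap.proj j

/-- Orthogonal complement of a subspace with respect to the standard bilinear form. -/
def perp {K : Type} [Field K] (L : Submodule K (Fin n → K)) : Submodule K (Fin n → K) :=
  ⨅ y ∈ L, LinearMap.ker (dotLin y)

/-- The coordinatewise inclusion `Fq^n → Fqm^n`. -/
def embFq (Fq Fqm : Type) [Field Fq] [Field Fqm] [Algebra Fq Fqm] :
    (Fin n → Fq) →ₗ[Fq] (Fin n → Fqm) :=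
  LinearMap.pi fun j => (Algebra.linearMap Fq Fqm).comp (LinearMap.proj j)

/-- `V_L = L ⊗ Fqm`, the `Fqm`-span of `L ⊆ Fq^n` inside `Fqm^n`. -/
def VL {Fq : Type} (Fqm : Type) [Field Fq] [Field Fqm] [Algebra Fq Fqm]
    (L : Submodule Fq (Fin n → Fq)) : Submodule Fqm (Fin n → Fqm) :=
  Submodule.span Fqm (embFq Fq Fqm '' (L : Set (Fin n → Fq)))

/-- Rank-punctured code `C^L`: the image of `C` in `Fqm^n / V_{L^⊥}`. -/
noncomputable def punct {Fq Fqm : Type} [Field Fq] [Field Fqm] [Algebra Fq Fqm]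
    (L : Submodule Fq (Fin n → Fq)) (C : Submodule Fqm (Fin n → Fqm)) :
    Submodule Fqm ((Fin n → Fqm) ⧸ VL Fqm (perp L)) :=
  Submodule.map (VL Fqm (perp L)).mkQ C


theorem mem_perp {K : Type} [Field K] (L : Submodule K (Fin n → K)) (x : Fin n → K) :
    x ∈ perp L ↔ ∀ y ∈ L, ∑ j, y j * x j = 0 := by
  simp [perp, dotLin, Submodule.mem_iInf]

theorem perp_eq_orth {K : Type} [Field K] (L : Submodule K (Fin n → K)) :
    perp L = LinearMap.BilinForm.orthogonal (dotProductBilin K K) L := by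
  ext x
  rw [mem_perp, LinearMap.BilinForm.mem_orthogonal_iff]
  rfl

theorem finrank_perp {K : Type} [Field K] (L : Submodule K (Fin n → K)) :
    finrank K L + finrank K (perp L) = n := by
  have h := LinearMap.BilinForm.finrank_add_finrank_orthogonal'
    (B := (dotProductBilin K K : LinearMap.BilinForm K (Fin n → K))) L
  have hk : LinearMap.ker (dotProductBilin K K : LinearMap.BilinForm K (Fin n → K)) = ⊥ := by
    rw [LinearMap.ker_eq_bot']
    intro v hv
    exact dotProduct_eq_zero v fun w => LinearMap.congr_fun hv w
  rw [hk, inf_bot_eq, finrank_bot, ← perp_eq_orth] at h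
  simpa using h

theorem perp_perp {K : Type} [Field K] (L : Submodule K (Fin n → K)) :
    perp (perp L) = L := by
  symm
  apply Submodule.eq_of_le_of_finrank_eq
  · intro x hx
    rw [mem_perp]
    intro y hy
    rw [mem_perp] at hy
    simpa [mul_comm] using hy x hx
  · have h1 := finrank_perp L
    have h2 := finrank_perp (perp L)
    omega

theorem perp_sup {K : Type} [Field K] (A B : Submodule K (Fin n → K)) :
    perp (A ⊔ B) = perp A ⊓ perp B := by
  ext x
  simp only [Submodule.mem_inf, mem_perp]
  constructor
  · intro h
    exact ⟨fun y hy => h y (le_sup_left (a := A) hy), fun y hy => h y (le_sup_right (a := A) hy)⟩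
  · rintro ⟨h1, h2⟩ y hy
    obtain ⟨a, ha, b, hb, rfl⟩ := Submodule.mem_sup.1 hy
    simp [add_mul, Finset.sum_add_distrib, h1 a ha, h2 b hb]

theorem embFq_apply (Fq Fqm : Type) [Field Fq] [Field Fqm] [Algebra Fq Fqm]
    (x : Fin n → Fq) (j : Fin n) : embFq Fq Fqm x j = algebraMap Fq Fqm (x j) := rfl

theorem finrank_VL_le {Fq : Type} (Fqm : Type) [Field Fq] [Field Fqm] [Algebra Fq Fqm]
    (L : Submodule Fq (Fin n → Fq)) : finrank Fqm (VL Fqm L) ≤ finrank Fq L := by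
  let b := Module.finBasis Fq L
  have hle : VL Fqm L ≤ Submodule.span Fqm
      (Set.range fun i => embFq Fq Fqm (b i : Fin n → Fq)) := by
    rw [VL, Submodule.span_le]
    rintro _ ⟨x, hx, rfl⟩
    have h : x = ∑ i, b.repr ⟨x, hx⟩ i • (b i : Fin n → Fq) := by
      have := congrArg L.subtype (b.sum_repr ⟨x, hx⟩)
      rw [map_sum] at this
      exact this.symm
    rw [h, map_sum]
    refine Submodule.sum_mem _ fun i _ => ?_
    rw [map_smul, ← algebraMap_smul Fqm]
    exact Submodule.smul_mem _ _ (Submodule.subset_span ⟨i, rfl⟩)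
  refine (Submodule.finrank_mono hle).trans ?_
  have := finrank_range_le_card (R := Fqm) (fun i => embFq Fq Fqm (b i : Fin n → Fq))
  simpa [Set.finrank] using this

theorem finrank_VL {Fq : Type} (Fqm : Type) [Field Fq] [Field Fqm] [Algebra Fq Fqm]
    (L : Submodule Fq (Fin n → Fq)) : finrank Fqm (VL Fqm L) = finrank Fq L := by
  obtain ⟨M, hM⟩ := Submodule.exists_isCompl L
  have h1 := finrank_VL_le Fqm L
  have h2 := finrank_VL_le Fqm M
  have h3 := Submodule.finrank_add_eq_of_isCompl hM
  have htop : VL Fqm L ⊔ VL Fqm M = ⊤ := by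
    rw [eq_top_iff]
    intro v _
    rw [pi_eq_sum_univ v]
    refine Submodule.sum_mem _ fun i _ => Submodule.smul_mem _ _ ?_
    obtain ⟨a, ha, b, hb, hab⟩ := Submodule.mem_sup.1
      (show (Pi.single i 1 : Fin n → Fq) ∈ L ⊔ M by rw [hM.sup_eq_top]; trivial)
    refine Submodule.mem_sup.2 ⟨_, Submodule.subset_span ⟨a, ha, rfl⟩, _,
      Submodule.subset_span ⟨b, hb, rfl⟩, ?_⟩
    rw [← map_add, hab]
    ext j
    rw [embFq_apply, Pi.single_apply]
    by_cases h : i = j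
    · simp [h]
    · simp [h, Ne.symm h]
  have h4 := Submodule.finrank_add_le_finrank_add_finrank (VL Fqm L) (VL Fqm M)
  rw [htop, finrank_top] at h4
  simp only [finrank_fin_fun] at h3 h4
  omega

theorem VL_perp {Fq : Type} (Fqm : Type) [Field Fq] [Field Fqm] [Algebra Fq Fqm]
    (L : Submodule Fq (Fin n → Fq)) : VL Fqm (perp L) = perp (VL Fqm L) := by
  apply Submodule.eq_of_le_of_finrank_eq
  · rw [VL, Submodule.span_le]
    rintro _ ⟨x, hx, rfl⟩
    rw [SetLike.mem_coe, mem_perp] at *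
    intro y hy
    induction hy using Submodule.span_induction with
    | mem y hy =>
      obtain ⟨z, hz, rfl⟩ := hy
      have := congrArg (algebraMap Fq Fqm) (hx z hz)
      simpa [embFq_apply] using this
    | zero => simp
    | add a b _ _ ha hb => simp [add_mul, Finset.sum_add_distrib, ha, hb]
    | smul c a _ ha => simp [mul_assoc, ← Finset.mul_sum, ha]
  · have h1 := finrank_perp L
    have h2 := finrank_perp (VL Fqm L)
    have h3 := finrank_VL Fqm L
    have h4 := finrank_VL Fqm (perp L)
    omega

theorem finrank_punct {Fq Fqm : Type} [Field Fq] [Field Fqm] [Algebra Fq Fqm]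
    (L : Submodule Fq (Fin n → Fq)) (C : Submodule Fqm (Fin n → Fqm)) :
    finrank Fqm (punct L C) + finrank Fqm ↥(C ⊓ VL Fqm (perp L)) = finrank Fqm C := by
  have h := LinearMap.finrank_range_add_finrank_ker ((VL Fqm (perp L)).mkQ.domRestrict C)
  rw [LinearMap.range_domRestrict, LinearMap.ker_domRestrict, Submodule.ker_mkQ] at h
  rw [← h, punct]
  congr 1
  rw [← Submodule.map_comap_subtype, Submodule.finrank_map_subtype_eq]

theorem finrank_punct_perp {Fq Fqm : Type} [Field Fq] [Field Fqm] [Algebra Fq Fqm]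
    (L : Submodule Fq (Fin n → Fq)) (C : Submodule Fqm (Fin n → Fqm)) :
    finrank Fqm (punct L (perp C)) + finrank Fqm C =
      finrank Fqm (VL Fqm L) + finrank Fqm (punct (perp L) C) := by
  have h1 := finrank_punct L (perp C)
  have h2 := finrank_punct (perp L) C
  have e1 : perp C ⊓ VL Fqm (perp L) = perp (C ⊔ VL Fqm L) := by rw [VL_perp, ← perp_sup]
  have e2 : C ⊓ VL Fqm (perp (perp L)) = C ⊓ VL Fqm L := by rw [perp_perp]
  have f1 := congrArg (fun S : Submodule Fqm (Fin n → Fqm) => finrank Fqm S) e1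
  have f2 := congrArg (fun S : Submodule Fqm (Fin n → Fqm) => finrank Fqm S) e2
  have h3 := finrank_perp (C ⊔ VL Fqm L)
  have h4 := finrank_perp C
  have h5 := Submodule.finrank_sup_add_finrank_inf_eq C (VL Fqm L)
  omega

/-- rank access structure duality:
`dim (C₂^⊥)^L − dim (C₁^⊥)^L + dim C₁^{L^⊥} − dim C₂^{L^⊥} = dim C₁ − dim C₂`,
and the induced correspondence `r ↔ ℓ − r` between the two quotient dimensions. -/
theorem stmt18 (q m n : ℕ) (Fq Fqm : Type) [Field Fq] [Field Fqm] [Algebra Fq Fqm]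
    [Finite Fqm] (hq : Nat.card Fq = q) (hm : finrank Fq Fqm = m)
    (C₁ C₂ : Submodule Fqm (Fin n → Fqm)) (hC : C₂ < C₁)
    (L : Submodule Fq (Fin n → Fq)) :
    ((finrank Fqm (punct L (perp C₂)) : ℤ) - (finrank Fqm (punct L (perp C₁)) : ℤ)
        + (finrank Fqm (punct (perp L) C₁) : ℤ) - (finrank Fqm (punct (perp L) C₂) : ℤ)
      = (finrank Fqm C₁ : ℤ) - (finrank Fqm C₂ : ℤ)) ∧
    (∀ r : ℕ, r ≤ finrank Fqm C₁ - finrank Fqm C₂ →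
      (((finrank Fqm (punct L (perp C₂)) : ℤ) - (finrank Fqm (punct L (perp C₁)) : ℤ)
          = (r : ℤ)) ↔
        ((finrank Fqm (punct (perp L) C₁) : ℤ) - (finrank Fqm (punct (perp L) C₂) : ℤ)
          = (finrank Fqm C₁ : ℤ) - (finrank Fqm C₂ : ℤ) - (r : ℤ)))) := by
  have h1 := finrank_punct_perp L C₁
  have h2 := finrank_punct_perp L C₂
  refine ⟨by omega, fun r hr => by omega⟩

end RankPaper
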